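/- Asymptotics of the characteristic functions in a sector (Lemma 2, equations (19)): Fix δ ∈ (0, π/2). Then, as |λ| → ∞ with arg λ ∈ [δ, π−δ]: 2i e^{iλT} Δ₁(λ) → h_{1,1} − i h_{1,2} and 2 e^{iλT} Δ₁₁(λ) → h_{1,1} − i h_{1,2}. -/

import Mathlib

open MeasureTheory Set Filter

noncomputable section

/-- A function `f : ℝ → ℂ` is absolutely continuous on `[0, T]`:
it is the indefinite integral of an integrable function. -/
def AbsContOn (f : ℝ → ℂ) (T : ℝ) : Prop :=
  ∃ g : ℝ → ℂ, IntervalIntegrable g volume 0 T ∧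
    ∀ x ∈ Icc (0 : ℝ) T, f x = f 0 + ∫ t in (0 : ℝ)..x, g t

/-- `y : ℝ → ℂ × ℂ` is a solution of the Dirac system `B y' + Ω y = λ y` on `[0, T]`,
where `B = ![![0,1],![-1,0]]` and `Ω = ![![p,q],![q,-p]]`:  `y` is continuous on `[0,T]`
and satisfies the equivalent system of integral equations coming from
`y₁' = q y₁ - (p + λ) y₂`, `y₂' = (λ - p) y₁ - q y₂`
(this encodes: `y` is absolutely continuous and the ODE holds a.e.). -/
def IsDiracSol (p q : ℝ → ℂ) (T : ℝ) (lam : ℂ) (y : ℝ → ℂ × ℂ) : Prop :=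
  ContinuousOn y (Icc (0 : ℝ) T) ∧
    ∀ x ∈ Icc (0 : ℝ) T,
      ((y x).1 = (y 0).1 + ∫ t in (0 : ℝ)..x, (q t * (y t).1 - (p t + lam) * (y t).2)) ∧
      ((y x).2 = (y 0).2 + ∫ t in (0 : ℝ)..x, ((lam - p t) * (y t).1 - q t * (y t).2))

/-- A nonlocal linear form `U(y) = ∫_{[0,T]} y₁ dμ₁ + ∫_{[0,T]} y₂ dμ₂`, where the complex
Borel measures `μᵢ` are encoded (via Radon–Nikodym) as integrable complex densities `wᵢ`
with respect to finite positive measures. -/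
structure NonlocalForm (T : ℝ) where
  μ₁ : Measure ℝ
  μ₂ : Measure ℝ
  finite₁ : IsFiniteMeasure μ₁
  finite₂ : IsFiniteMeasure μ₂
  w₁ : ℝ → ℂ
  w₂ : ℝ → ℂ
  int₁ : Integrable w₁ μ₁
  int₂ : Integrable w₂ μ₂

namespace NonlocalForm

variable {T : ℝ}

/-- The value `U(y)` of the nonlocal form on a function `y`. -/
def app (U : NonlocalForm T) (y : ℝ → ℂ × ℂ) : ℂ :=
  (∫ t in Icc (0 : ℝ) T, U.w₁ t * (y t).1 ∂U.μ₁) +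
    ∫ t in Icc (0 : ℝ) T, U.w₂ t * (y t).2 ∂U.μ₂

/-- `h₁ = μ₁({0})`, the mass of the first complex measure at `0`. -/
def h₁ (U : NonlocalForm T) : ℂ := U.w₁ 0 * ((U.μ₁ {0}).toReal : ℂ)

/-- `h₂ = μ₂({0})`, the mass of the second complex measure at `0`. -/
def h₂ (U : NonlocalForm T) : ℂ := U.w₂ 0 * ((U.μ₂ {0}).toReal : ℂ)

end NonlocalForm

/-- A two-point (local) linear form `y ↦ c₁ y₁(t) + c₂ y₂(t)`. -/
def locForm (c₁ c₂ : ℂ) (t : ℝ) (y : ℝ → ℂ × ℂ) : ℂ := c₁ * (y t).1 + c₂ * (y t).2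

/-- `f` and `g` have the same order of zero at `z` (order possibly `0` or `∞`):
for every `n`, the first `n` derivatives of `f` vanish at `z` iff
the first `n` derivatives of `g` do. -/
def ZeroOrderEq (f g : ℂ → ℂ) (z : ℂ) : Prop :=
  ∀ n : ℕ, (∀ k < n, iteratedDeriv k f z = 0) ↔ (∀ k < n, iteratedDeriv k g z = 0)

/-- The filter of `λ → ∞` within the sector `arg λ ∈ [δ, π - δ]`. -/
def sectorFilter (δ : ℝ) : Filter ℂ :=
  Filter.comap (fun lam : ℂ => ‖lam‖) Filter.atTop ⊓
    Filter.principal {lam : ℂ | Complex.arg lam ∈ Icc δ (Real.pi - δ)}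

lemma aux_contOn_of_absCont {f : ℝ → ℂ} {T : ℝ} (hT : 0 < T) (h : AbsContOn f T) :
    ContinuousOn f (Icc 0 T) := by
  obtain ⟨g, hg, hf⟩ := h
  have h1 : ContinuousOn (fun x => ∫ t in (0 : ℝ)..x, g t) (uIcc 0 T) :=
    intervalIntegral.continuousOn_primitive_interval' hg left_mem_uIcc
  rw [uIcc_of_le hT.le] at h1
  exact (continuousOn_const.add h1).congr hf

lemma aux_deriv {f y : ℝ → ℂ} {c : ℂ} {T : ℝ} (hT : 0 < T) (hf : ContinuousOn f (Icc 0 T))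
    (hy : ∀ x ∈ Icc (0 : ℝ) T, y x = c + ∫ t in (0 : ℝ)..x, f t) :
    ∀ x ∈ Ico (0 : ℝ) T, HasDerivWithinAt y (f x) (Ici x) x := by
  intro x hx
  set F : ℝ → ℂ := IccExtend hT.le ((Icc 0 T).domRestrict f) with hF
  have hFc : Continuous F := (continuousOn_iff_continuous_domRestrict.1 hf).Icc_extend'
  have hFf : ∀ t ∈ Icc (0 : ℝ) T, F t = f t := fun t ht => by
    rw [hF, IccExtend_of_mem _ _ ht]; rfl
  have hx' : x ∈ Icc (0 : ℝ) T := ⟨hx.1, hx.2.le⟩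
  have hy' : ∀ z ∈ Icc (0 : ℝ) T, y z = c + ∫ t in (0 : ℝ)..z, F t := by
    intro z hz
    rw [hy z hz]
    congr 1
    apply intervalIntegral.integral_congr
    intro t ht
    rw [uIcc_of_le hz.1] at ht
    exact (hFf t ⟨ht.1, ht.2.trans hz.2⟩).symm
  have hd : HasDerivAt (fun z => c + ∫ t in (0 : ℝ)..z, F t) (F x) x :=
    (hFc.integral_hasStrictDerivAt 0 x).hasDerivAt.const_add c
  rw [hFf x hx'] at hd
  have h2 : HasDerivWithinAt y (f x) (Icc 0 T) x := hd.hasDerivWithinAt.congr hy' (hy' x hx')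
  apply h2.mono_of_mem_nhdsWithin
  have : Icc x T ∈ nhdsWithin x (Ici x) := Icc_mem_nhdsGE hx.2
  exact mem_of_superset this (Icc_subset_Icc_left hx.1)

/-- Mean value inequality for increments. -/
lemma aux_mvt {f f' : ℝ → ℂ} {B B' : ℝ → ℝ} {s T : ℝ} (hs : s ≤ T)
    (hf : ContinuousOn f (Icc s T))
    (hf' : ∀ x ∈ Ico s T, HasDerivWithinAt f (f' x) (Ici x) x)
    (hB : ∀ x, HasDerivAt B (B' x) x)
    (hb : ∀ x ∈ Ico s T, ‖f' x‖ ≤ B' x) :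
    ‖f T - f s‖ ≤ B T - B s := by
  have := image_norm_le_of_norm_deriv_right_le_deriv_boundary
    (f := fun x => f x - f s) (f' := f') (a := s) (b := T) (B := fun x => B x - B s) (B' := B')
    (hf.sub continuousOn_const) (fun x hx => (hf' x hx).sub_const _) (by simp)
    (fun x => (hB x).sub_const _) hb
  exact this (right_mem_Icc.2 hs)

lemma aux_core {T C : ℝ} (hT : 0 < T) (hC : 0 ≤ C) {a b U V : ℝ → ℂ} {lam : ℂ}
    (ha : ∀ x ∈ Icc (0 : ℝ) T, ‖a x‖ ≤ C) (hb : ∀ x ∈ Icc (0 : ℝ) T, ‖b x‖ ≤ C)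
    (hU : ContinuousOn U (Icc 0 T)) (hV : ContinuousOn V (Icc 0 T))
    (hU' : ∀ x ∈ Ico (0 : ℝ) T, HasDerivWithinAt U (a x * V x) (Ici x) x)
    (hV' : ∀ x ∈ Ico (0 : ℝ) T,
      HasDerivWithinAt V (-(2 * Complex.I * lam) * V x + b x * U x) (Ici x) x)
    (hUT : ‖U T‖ ≤ 1) (hVT : ‖V T‖ ≤ 1) (hpos : 0 < lam.im)
    (hlarge : C + C ^ 2 * T ≤ lam.im) :
    ∀ t ∈ Icc (0 : ℝ) T, ‖U t‖ ≤ 3 ∧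
      ‖U T - U t‖ ≤ (C + 3 * C ^ 2 * T) / (2 * lam.im) ∧
      ‖V t‖ ≤ Real.exp (-(2 * lam.im * (T - t))) + 3 * C / (2 * lam.im) := by
  set η := lam.im with hη
  obtain ⟨tm, htm, hM⟩ := isCompact_Icc.exists_isMaxOn (nonempty_Icc.2 hT.le) hU.norm
  set M := ‖U tm‖ with hMdef
  have hM' : ∀ t ∈ Icc (0 : ℝ) T, ‖U t‖ ≤ M := fun t ht => hM ht
  have hM0 : 0 ≤ M := norm_nonneg _
  have hE : ∀ x : ℝ, HasDerivAt (fun x : ℝ => Complex.exp (2 * Complex.I * lam * (x : ℂ)))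
      (Complex.exp (2 * Complex.I * lam * (x : ℂ)) * (2 * Complex.I * lam)) x := by
    intro x
    have h1 : HasDerivAt (fun x : ℝ => 2 * Complex.I * lam * (x : ℂ)) (2 * Complex.I * lam) x := by
      simpa using (Complex.ofRealCLM.hasDerivAt (x := x)).const_mul (2 * Complex.I * lam)
    exact h1.cexp
  have hEn : ∀ x : ℝ, ‖Complex.exp (2 * Complex.I * lam * (x : ℂ))‖ = Real.exp (-(2 * η * x)) := by
    intro x
    rw [Complex.norm_exp]
    congr 1
    simp [hη]
  have hVb : ∀ t ∈ Icc (0 : ℝ) T,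
      ‖V t‖ ≤ Real.exp (-(2 * η * (T - t))) + C * M / (2 * η) := by
    intro t ht
    have hsub : Icc t T ⊆ Icc 0 T := Icc_subset_Icc_left ht.1
    have key := aux_mvt (f := fun x => Complex.exp (2 * Complex.I * lam * (x : ℂ)) * V x)
      (f' := fun x => Complex.exp (2 * Complex.I * lam * (x : ℂ)) * (b x * U x))
      (B := fun x => -(C * M / (2 * η)) * Real.exp (-(2 * η * x)))
      (B' := fun x => C * M * Real.exp (-(2 * η * x))) ht.2
      ((Continuous.continuousOn (by fun_prop)).mul (hV.mono hsub))
      (by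
        intro x hx
        have hx0 : x ∈ Ico (0 : ℝ) T := ⟨ht.1.trans hx.1, hx.2⟩
        have := (hE x).hasDerivWithinAt.mul (hV' x hx0) (s := Ici x)
        refine this.congr_deriv ?_
        ring)
      (by
        intro x
        have h1 : HasDerivAt (fun x : ℝ => -(2 * η * x)) (-(2 * η)) x := by
          simpa using (hasDerivAt_id x).const_mul (-(2 * η))
        have := h1.exp.const_mul (-(C * M / (2 * η)))
        refine this.congr_deriv ?_
        field_simp)
      (by
        intro x hx
        have hx0 : x ∈ Icc (0 : ℝ) T := ⟨ht.1.trans hx.1, hx.2.le⟩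
        rw [norm_mul, norm_mul, hEn, mul_comm]
        gcongr
        · exact hb x hx0
        · exact hM' x hx0)
    have h3 : ‖Complex.exp (2 * Complex.I * lam * (t : ℂ)) * V t‖ ≤
        ‖Complex.exp (2 * Complex.I * lam * (T : ℂ)) * V T‖ +
          C * M / (2 * η) * Real.exp (-(2 * η * t)) := by
      have h4 := norm_le_norm_add_norm_sub' (Complex.exp (2 * Complex.I * lam * (t : ℂ)) * V t)
        (Complex.exp (2 * Complex.I * lam * (T : ℂ)) * V T)
      rw [norm_sub_rev] at h4
      have h5 : 0 ≤ C * M / (2 * η) * Real.exp (-(2 * η * T)) := by positivity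
      linarith
    rw [norm_mul, norm_mul, hEn, hEn] at h3
    have h6 : Real.exp (-(2 * η * T)) =
        Real.exp (-(2 * η * t)) * Real.exp (-(2 * η * (T - t))) := by
      rw [← Real.exp_add]; congr 1; ring
    have h7 : Real.exp (-(2 * η * t)) * ‖V t‖ ≤ Real.exp (-(2 * η * t)) *
        (Real.exp (-(2 * η * (T - t))) + C * M / (2 * η)) := by
      have h8 : Real.exp (-(2 * η * T)) * ‖V T‖ ≤ Real.exp (-(2 * η * T)) * 1 := by gcongr
      rw [h6] at h8 h3
      linarith
    exact le_of_mul_le_mul_left h7 (Real.exp_pos _)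
  have hUb : ∀ t ∈ Icc (0 : ℝ) T, ‖U T - U t‖ ≤ (C + C ^ 2 * M * T) / (2 * η) := by
    intro t ht
    have hsub : Icc t T ⊆ Icc 0 T := Icc_subset_Icc_left ht.1
    have key := aux_mvt (f := U) (f' := fun x => a x * V x)
      (B := fun x => C / (2 * η) * Real.exp (-(2 * η * (T - x))) + C * (C * M / (2 * η)) * x)
      (B' := fun x => C * (Real.exp (-(2 * η * (T - x))) + C * M / (2 * η))) ht.2
      (hU.mono hsub) (fun x hx => hU' x ⟨ht.1.trans hx.1, hx.2⟩)
      (by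
        intro x
        have h1 : HasDerivAt (fun x : ℝ => -(2 * η * (T - x))) (2 * η) x := by
          simpa using ((hasDerivAt_id x).const_sub T).const_mul (-(2 * η))
        have := (h1.exp.const_mul (C / (2 * η))).add
          ((hasDerivAt_id x).const_mul (C * (C * M / (2 * η))))
        refine this.congr_deriv ?_
        field_simp)
      (by
        intro x hx
        have hx0 : x ∈ Icc (0 : ℝ) T := ⟨ht.1.trans hx.1, hx.2.le⟩
        rw [norm_mul]
        gcongr
        · exact ha x hx0
        · exact hVb x hx0)
    simp only [sub_self, mul_zero, neg_zero, Real.exp_zero, mul_one] at key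
    have h5 : 0 ≤ C / (2 * η) * Real.exp (-(2 * η * (T - t))) := by positivity
    have h6 : 0 ≤ C * (C * M / (2 * η)) * t := mul_nonneg (by positivity) ht.1
    have h7 : (C + C ^ 2 * M * T) / (2 * η) = C / (2 * η) + C * (C * M / (2 * η)) * T := by
      ring
    linarith
  have hM3 : M ≤ 3 := by
    have h1 := hUb tm htm
    rw [le_div_iff₀ (by positivity)] at h1
    have h2 : M ≤ 1 + ‖U T - U tm‖ := by
      have := norm_le_norm_add_norm_sub' (U tm) (U T)
      rw [norm_sub_rev] at this
      linarith
    have hCη : C ≤ η := by nlinarith [mul_nonneg (sq_nonneg C) hT.le]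
    have hCη2 : C ^ 2 * T ≤ η := by linarith
    have h3 : C ^ 2 * M * T ≤ M * η := by nlinarith
    have h4 : (M - 1) * (2 * η) ≤ η + M * η := by nlinarith
    by_contra hcon
    push Not at hcon
    nlinarith
  intro t ht
  refine ⟨(hM' t ht).trans hM3, (hUb t ht).trans ?_, (hVb t ht).trans ?_⟩
  · have : C ^ 2 * M * T ≤ 3 * C ^ 2 * T := by
      nlinarith [mul_nonneg (sq_nonneg C) hT.le]
    gcongr
  · have : C * M ≤ 3 * C := by nlinarith
    gcongr

lemma aux_dom {l : Filter ℂ} [l.IsCountablyGenerated] {T K : ℝ} (hT : 0 < T) (μ : Measure ℝ)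
    {w : ℝ → ℂ} (hw : Integrable w μ) {f : ℂ → ℝ → ℂ} {c : ℂ}
    (hf : ∀ lam, ContinuousOn (f lam) (Icc 0 T))
    (hK : ∀ᶠ lam in l, ∀ t ∈ Icc (0 : ℝ) T, ‖f lam t‖ ≤ K)
    (h0 : Tendsto (fun lam => f lam 0) l (nhds c))
    (ht : ∀ t ∈ Ioc (0 : ℝ) T, Tendsto (fun lam => f lam t) l (nhds 0)) :
    Tendsto (fun lam => ∫ t in Icc (0 : ℝ) T, w t * f lam t ∂μ) l
      (nhds (c * (w 0 * ((μ {0}).toReal : ℂ)))) := by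
  have hlim : ∫ t in Icc (0 : ℝ) T, ({0} : Set ℝ).indicator (fun t => w t * c) t ∂μ =
      c * (w 0 * ((μ {0}).toReal : ℂ)) := by
    rw [setIntegral_indicator (measurableSet_singleton 0)]
    have : Icc (0 : ℝ) T ∩ {0} = {0} := by
      ext x; simp; rintro rfl; exact ⟨le_rfl, hT.le⟩
    rw [this, integral_singleton]
    simp [Measure.real]
    ring
  rw [← hlim]
  apply tendsto_integral_filter_of_dominated_convergence (fun t => ‖w t‖ * K)
  · refine Eventually.of_forall fun lam => ?_
    exact hw.aestronglyMeasurable.restrict.mul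
      ((hf lam).aestronglyMeasurable measurableSet_Icc)
  · filter_upwards [hK] with lam hlam
    filter_upwards [ae_restrict_mem measurableSet_Icc] with t ht
    rw [norm_mul]
    gcongr
    exact hlam t ht
  · exact (hw.norm.mul_const K).restrict
  · filter_upwards [ae_restrict_mem measurableSet_Icc] with t htt
    rcases eq_or_lt_of_le htt.1 with h | h
    · subst h
      simpa using h0.const_mul (w 0)
    · have : t ∉ ({0} : Set ℝ) := by simpa using h.ne'
      rw [indicator_of_notMem this]
      simpa using (ht t ⟨h, htt.2⟩).const_mul (w t)

lemma aux_int {T : ℝ} (μ : Measure ℝ) {w : ℝ → ℂ} (hw : Integrable w μ) {f : ℝ → ℂ}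
    (hf : ContinuousOn f (Icc 0 T)) : Integrable (fun t => w t * f t) (μ.restrict (Icc 0 T)) := by
  obtain ⟨K, hK⟩ := isCompact_Icc.exists_bound_of_continuousOn hf
  refine hw.restrict.mul_bdd (c := K) (hf.aestronglyMeasurable measurableSet_Icc) ?_
  filter_upwards [ae_restrict_mem measurableSet_Icc] with t ht using hK t ht

lemma aux_im {δ : ℝ} (hδ : δ ∈ Ioo (0 : ℝ) (Real.pi / 2)) :
    Tendsto (fun lam : ℂ => lam.im) (sectorFilter δ) atTop := by
  have hs : 0 < Real.sin δ := Real.sin_pos_of_pos_of_lt_pi hδ.1 (by linarith [hδ.2, Real.pi_pos])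
  have h1 : Tendsto (fun lam : ℂ => ‖lam‖ * Real.sin δ) (sectorFilter δ) atTop :=
    Tendsto.atTop_mul_const hs (tendsto_comap.mono_left inf_le_left)
  refine tendsto_atTop_mono' _ ?_ h1
  have : ∀ᶠ lam in sectorFilter δ, Complex.arg lam ∈ Icc δ (Real.pi - δ) :=
    mem_inf_of_right (mem_principal_self _)
  filter_upwards [this] with lam hl
  have h2 : Real.sin δ ≤ Real.sin (Complex.arg lam) := by
    rcases le_total (Complex.arg lam) (Real.pi / 2) with h | h
    · exact Real.sin_le_sin_of_le_of_le_pi_div_two (by linarith [hδ.1, Real.pi_pos]) h hl.1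
    · rw [← Real.sin_pi_sub (Complex.arg lam)]
      exact Real.sin_le_sin_of_le_of_le_pi_div_two (by linarith [hδ.1, Real.pi_pos])
        (by linarith) (by linarith [hl.2])
  calc ‖lam‖ * Real.sin δ ≤ ‖lam‖ * Real.sin (Complex.arg lam) := by gcongr
    _ = lam.im := Complex.norm_mul_sin_arg lam

instance aux_cg (δ : ℝ) : (sectorFilter δ).IsCountablyGenerated := by
  unfold sectorFilter; infer_instance

lemma aux_sol {p q : ℝ → ℂ} {T : ℝ} (hT : 0 < T) (hp : AbsContOn p T) (hq : AbsContOn q T)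
    {lam : ℂ} {y : ℝ → ℂ × ℂ} (h : IsDiracSol p q T lam y) :
    ContinuousOn (fun t => (y t).1) (Icc 0 T) ∧ ContinuousOn (fun t => (y t).2) (Icc 0 T) ∧
    (∀ x ∈ Ico (0 : ℝ) T, HasDerivWithinAt (fun t => (y t).1)
      (q x * (y x).1 - (p x + lam) * (y x).2) (Ici x) x) ∧
    (∀ x ∈ Ico (0 : ℝ) T, HasDerivWithinAt (fun t => (y t).2)
      ((lam - p x) * (y x).1 - q x * (y x).2) (Ici x) x) := by
  have cp := aux_contOn_of_absCont hT hp
  have cq := aux_contOn_of_absCont hT hq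
  have c1 : ContinuousOn (fun t => (y t).1) (Icc 0 T) := h.1.fst
  have c2 : ContinuousOn (fun t => (y t).2) (Icc 0 T) := h.1.snd
  refine ⟨c1, c2, ?_, ?_⟩
  · exact aux_deriv hT ((cq.mul c1).sub ((cp.add continuousOn_const).mul c2))
      (fun x hx => (h.2 x hx).1)
  · exact aux_deriv hT (((continuousOn_const.sub cp).mul c1).sub (cq.mul c2))
      (fun x hx => (h.2 x hx).2)

lemma aux_wronskian {p q : ℝ → ℂ} {T : ℝ} (hT : 0 < T) (hp : AbsContOn p T) (hq : AbsContOn q T)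
    {lam : ℂ} {y z : ℝ → ℂ × ℂ} (hy : IsDiracSol p q T lam y) (hz : IsDiracSol p q T lam z)
    (hy0 : y 0 = (1, 0)) (hz0 : z 0 = (0, 1)) :
    (y T).1 * (z T).2 - (y T).2 * (z T).1 = 1 := by
  obtain ⟨a1, a2, a3, a4⟩ := aux_sol hT hp hq hy
  obtain ⟨b1, b2, b3, b4⟩ := aux_sol hT hp hq hz
  have := constant_of_has_deriv_right_zero
    (f := fun t => (y t).1 * (z t).2 - (y t).2 * (z t).1) (a := 0) (b := T)
    ((a1.mul b2).sub (a2.mul b1))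
    (by
      intro x hx
      refine (((a3 x hx).mul (b4 x hx)).sub ((a4 x hx).mul (b3 x hx))).congr_deriv ?_
      ring) T (right_mem_Icc.2 hT.le)
  simpa [hy0, hz0] using this

/-- Asymptotics for a single family of solutions normalised at `T`. -/
lemma aux_family {p q : ℝ → ℂ} {T : ℝ} (hT : 0 < T) (hp : AbsContOn p T) (hq : AbsContOn q T)
    {δ : ℝ} (hδ : δ ∈ Ioo (0 : ℝ) (Real.pi / 2)) {y z : ℂ → ℝ → ℂ} {d e : ℂ}
    (cy : ∀ lam, ContinuousOn (y lam) (Icc 0 T)) (cz : ∀ lam, ContinuousOn (z lam) (Icc 0 T))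
    (hy : ∀ lam, ∀ x ∈ Ico (0 : ℝ) T, HasDerivWithinAt (y lam)
      (q x * y lam x - (p x + lam) * z lam x) (Ici x) x)
    (hz : ∀ lam, ∀ x ∈ Ico (0 : ℝ) T, HasDerivWithinAt (z lam)
      ((lam - p x) * y lam x - q x * z lam x) (Ici x) x)
    (hyT : ∀ lam, y lam T = d) (hzT : ∀ lam, z lam T = e)
    (h1 : ‖d + Complex.I * e‖ ≤ 1) (h2 : ‖d - Complex.I * e‖ ≤ 1) :
    ∃ f g : ℂ → ℝ → ℂ,
      (∀ lam t, Complex.exp (Complex.I * lam * T) * y lam t = (f lam t + g lam t) / 2) ∧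
      (∀ lam t, Complex.exp (Complex.I * lam * T) * z lam t =
        -Complex.I * (f lam t - g lam t) / 2) ∧
      (∀ᶠ lam in sectorFilter δ, ∀ t ∈ Icc (0 : ℝ) T, ‖f lam t‖ ≤ 3 ∧ ‖g lam t‖ ≤ 3) ∧
      Tendsto (fun lam => f lam 0) (sectorFilter δ) (nhds (d + Complex.I * e)) ∧
      Tendsto (fun lam => g lam 0) (sectorFilter δ) (nhds 0) ∧
      (∀ t ∈ Ioc (0 : ℝ) T, Tendsto (fun lam => f lam t) (sectorFilter δ) (nhds 0)) ∧
      (∀ t ∈ Ioc (0 : ℝ) T, Tendsto (fun lam => g lam t) (sectorFilter δ) (nhds 0)) := by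
  have cp := aux_contOn_of_absCont hT hp
  have cq := aux_contOn_of_absCont hT hq
  obtain ⟨K1, hK1⟩ := isCompact_Icc.exists_bound_of_continuousOn
    (cq.sub (continuousOn_const (c := Complex.I) |>.mul cp))
  obtain ⟨K2, hK2⟩ := isCompact_Icc.exists_bound_of_continuousOn
    (cq.add (continuousOn_const (c := Complex.I) |>.mul cp))
  set C : ℝ := max (max K1 K2) 0 with hCdef
  have hC : 0 ≤ C := le_max_right _ _
  have hC1 : ∀ x ∈ Icc (0 : ℝ) T, ‖q x - Complex.I * p x‖ ≤ C := fun x hx =>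
    (hK1 x hx).trans ((le_max_left _ _).trans (le_max_left _ _))
  have hC2 : ∀ x ∈ Icc (0 : ℝ) T, ‖q x + Complex.I * p x‖ ≤ C := fun x hx =>
    (hK2 x hx).trans ((le_max_right _ _).trans (le_max_left _ _))
  set E : ℂ → ℝ → ℂ := fun lam t => Complex.exp (Complex.I * lam * ((T : ℂ) - t)) with hEdef
  set U : ℂ → ℝ → ℂ := fun lam t => E lam t * (y lam t + Complex.I * z lam t) with hUdef
  set V : ℂ → ℝ → ℂ := fun lam t => E lam t * (y lam t - Complex.I * z lam t) with hVdef
  have hE : ∀ lam (x : ℝ), HasDerivAt (E lam) (E lam x * (-(Complex.I * lam))) x := by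
    intro lam x
    have h1 : HasDerivAt (fun x : ℝ => Complex.I * lam * ((T : ℂ) - x)) (-(Complex.I * lam)) x := by
      simpa using ((Complex.ofRealCLM.hasDerivAt (x := x)).const_sub (T : ℂ)).const_mul
        (Complex.I * lam)
    exact h1.cexp
  have cE : ∀ lam, Continuous (E lam) := fun lam => by simp only [hEdef]; fun_prop
  have hET : ∀ lam, E lam T = 1 := fun lam => by simp [hEdef]
  have him := aux_im hδ
  have core : ∀ᶠ lam in sectorFilter δ, ∀ t ∈ Icc (0 : ℝ) T, ‖U lam t‖ ≤ 3 ∧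
      ‖U lam T - U lam t‖ ≤ (C + 3 * C ^ 2 * T) / (2 * lam.im) ∧
      ‖V lam t‖ ≤ Real.exp (-(2 * lam.im * (T - t))) + 3 * C / (2 * lam.im) := by
    filter_upwards [him.eventually_gt_atTop 0, him.eventually_ge_atTop (C + C ^ 2 * T)]
      with lam hpos hlarge
    refine aux_core hT hC hC1 hC2 ?_ ?_ ?_ ?_ ?_ ?_ hpos hlarge
    · exact (cE lam).continuousOn.mul ((cy lam).add (continuousOn_const.mul (cz lam)))
    · exact (cE lam).continuousOn.mul ((cy lam).sub (continuousOn_const.mul (cz lam)))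
    · intro x hx
      refine ((hE lam x).hasDerivWithinAt.mul
        ((hy lam x hx).add ((hz lam x hx).const_mul Complex.I))).congr_deriv ?_
      simp only [hVdef, Pi.add_apply]
      linear_combination (-(E lam x * p x * z lam x)
        - E lam x * lam * z lam x) * Complex.I_sq
    · intro x hx
      refine ((hE lam x).hasDerivWithinAt.mul
        ((hy lam x hx).sub ((hz lam x hx).const_mul Complex.I))).congr_deriv ?_
      simp only [hUdef, hVdef, Pi.sub_apply]
      linear_combination (-(E lam x * p x * z lam x)
        - E lam x * lam * z lam x) * Complex.I_sq
    · simpa [hUdef, hET, hyT, hzT] using h1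
    · simpa [hVdef, hET, hyT, hzT] using h2
  have hexp : ∀ lam (t : ℝ), Complex.exp (Complex.I * lam * T) =
      Complex.exp (Complex.I * lam * t) * E lam t := by
    intro lam t
    simp only [hEdef]
    rw [← Complex.exp_add]; congr 1; ring
  have hnexp : ∀ (lam : ℂ) (t : ℝ), ‖Complex.exp (Complex.I * lam * t)‖ =
      Real.exp (-(lam.im * t)) := by
    intro lam t
    rw [Complex.norm_exp]; congr 1; simp
  have hinv : ∀ c : ℝ, Tendsto (fun lam : ℂ => c / (2 * lam.im)) (sectorFilter δ) (nhds 0) :=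
    fun c => (him.const_mul_atTop two_pos).const_div_atTop c
  have hVsmall : ∀ᶠ lam in sectorFilter δ, ∀ t ∈ Icc (0 : ℝ) T, ‖V lam t‖ ≤ 3 := by
    filter_upwards [core, him.eventually_gt_atTop 0, (hinv (3 * C)).eventually_le_const
      (show (0 : ℝ) < 2 by norm_num)] with lam h hpos h3 t ht
    have h4 : Real.exp (-(2 * lam.im * (T - t))) ≤ 1 := by
      rw [Real.exp_le_one_iff]
      have : 0 ≤ T - t := by linarith [ht.2]
      have : 0 ≤ 2 * lam.im * (T - t) := by positivity
      linarith
    linarith [(h t ht).2.2]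
  have hdecay : ∀ W : ℂ → ℝ → ℂ, (∀ᶠ lam in sectorFilter δ, ∀ t ∈ Icc (0 : ℝ) T, ‖W lam t‖ ≤ 3) →
      ∀ t ∈ Ioc (0 : ℝ) T, Tendsto (fun lam => Complex.exp (Complex.I * lam * t) * W lam t)
        (sectorFilter δ) (nhds 0) := by
    intro W hW t ht
    have h1 : Tendsto (fun lam : ℂ => Real.exp (-(lam.im * t)) * 3) (sectorFilter δ) (nhds 0) := by
      have := (Real.tendsto_exp_neg_atTop_nhds_zero.comp (him.atTop_mul_const ht.1)).mul_const 3
      simpa using this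
    refine squeeze_zero_norm' ?_ h1
    filter_upwards [hW] with lam h
    rw [norm_mul, hnexp]
    gcongr
    exact h t ⟨ht.1.le, ht.2⟩
  have hbd : ∀ W : ℂ → ℝ → ℂ, (∀ᶠ lam in sectorFilter δ, ∀ t ∈ Icc (0 : ℝ) T, ‖W lam t‖ ≤ 3) →
      ∀ᶠ lam in sectorFilter δ, ∀ t ∈ Icc (0 : ℝ) T,
        ‖Complex.exp (Complex.I * lam * t) * W lam t‖ ≤ 3 := by
    intro W hW
    filter_upwards [hW, him.eventually_gt_atTop 0] with lam h hpos t ht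
    rw [norm_mul, hnexp]
    have h4 : Real.exp (-(lam.im * t)) ≤ 1 := by
      rw [Real.exp_le_one_iff]
      have := mul_nonneg hpos.le ht.1
      linarith
    calc _ ≤ 1 * ‖W lam t‖ := by gcongr
      _ ≤ 3 := by rw [one_mul]; exact h t ht
  have hUsmall : ∀ᶠ lam in sectorFilter δ, ∀ t ∈ Icc (0 : ℝ) T, ‖U lam t‖ ≤ 3 :=
    core.mono fun lam h t ht => (h t ht).1
  have h0mem : (0 : ℝ) ∈ Icc 0 T := ⟨le_rfl, hT.le⟩
  refine ⟨fun lam t => Complex.exp (Complex.I * lam * t) * U lam t,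
    fun lam t => Complex.exp (Complex.I * lam * t) * V lam t, ?_, ?_, ?_, ?_, ?_,
    hdecay U hUsmall, hdecay V hVsmall⟩
  · intro lam t
    rw [hexp lam t]; simp only [hUdef, hVdef]; ring
  · intro lam t
    rw [hexp lam t]; simp only [hUdef, hVdef]
    linear_combination (Complex.exp (Complex.I * lam * t) * E lam t * z lam t) * Complex.I_sq
  · exact ((hbd U hUsmall).and (hbd V hVsmall)).mono fun lam h t ht => ⟨h.1 t ht, h.2 t ht⟩
  · simp only [Complex.ofReal_zero, mul_zero, Complex.exp_zero, one_mul]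
    have hUT : ∀ lam, U lam T = d + Complex.I * e := fun lam => by
      simp [hUdef, hET, hyT, hzT]
    rw [tendsto_iff_norm_sub_tendsto_zero]
    refine squeeze_zero' (Eventually.of_forall fun _ => norm_nonneg _) ?_
      (hinv (C + 3 * C ^ 2 * T))
    filter_upwards [core] with lam h
    rw [← hUT lam, norm_sub_rev]
    exact (h 0 h0mem).2.1
  · simp only [Complex.ofReal_zero, mul_zero, Complex.exp_zero, one_mul]
    have h1 : Tendsto (fun lam : ℂ => Real.exp (-(2 * lam.im * (T - 0))) + 3 * C / (2 * lam.im))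
        (sectorFilter δ) (nhds 0) := by
      have := (Real.tendsto_exp_neg_atTop_nhds_zero.comp
        ((him.const_mul_atTop two_pos).atTop_mul_const (show 0 < T - 0 by linarith))).add
          (hinv (3 * C))
      simpa using this
    refine squeeze_zero_norm' ?_ h1
    filter_upwards [core] with lam h
    exact (h 0 h0mem).2.2

lemma aux_main {p q : ℝ → ℂ} {T : ℝ} (hT : 0 < T) (hp : AbsContOn p T) (hq : AbsContOn q T)
    (U₁ : NonlocalForm T) (X₁ X₂ : ℂ → ℝ → ℂ × ℂ)
    (hX₁ : ∀ lam, IsDiracSol p q T lam (X₁ lam))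
    (hX₂ : ∀ lam, IsDiracSol p q T lam (X₂ lam))
    {δ : ℝ} (hδ : δ ∈ Ioo (0 : ℝ) (Real.pi / 2)) (α β : ℂ → ℂ) {d e : ℂ}
    (hd : ∀ lam, (X₁ lam T).1 * α lam - (X₂ lam T).1 * β lam = d)
    (he : ∀ lam, (X₁ lam T).2 * α lam - (X₂ lam T).2 * β lam = e)
    (h1 : ‖d + Complex.I * e‖ ≤ 1) (h2 : ‖d - Complex.I * e‖ ≤ 1) :
    Tendsto (fun lam : ℂ => Complex.exp (Complex.I * lam * (T : ℂ)) *
      (U₁.app (X₁ lam) * α lam - U₁.app (X₂ lam) * β lam))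
      (sectorFilter δ) (nhds ((d + Complex.I * e) / 2 * (U₁.h₁ - Complex.I * U₁.h₂))) := by
  have s1 := fun lam => aux_sol hT hp hq (hX₁ lam)
  have s2 := fun lam => aux_sol hT hp hq (hX₂ lam)
  set y : ℂ → ℝ → ℂ := fun lam t => (X₁ lam t).1 * α lam - (X₂ lam t).1 * β lam with hy
  set z : ℂ → ℝ → ℂ := fun lam t => (X₁ lam t).2 * α lam - (X₂ lam t).2 * β lam with hz
  have cy : ∀ lam, ContinuousOn (y lam) (Icc 0 T) := fun lam =>
    ((s1 lam).1.mul continuousOn_const).sub ((s2 lam).1.mul continuousOn_const)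
  have cz : ∀ lam, ContinuousOn (z lam) (Icc 0 T) := fun lam =>
    ((s1 lam).2.1.mul continuousOn_const).sub ((s2 lam).2.1.mul continuousOn_const)
  obtain ⟨f, g, hf1, hf2, hbd, hf0, hg0, hft, hgt⟩ := aux_family hT hp hq hδ cy cz
    (by
      intro lam x hx
      refine ((((s1 lam).2.2.1 x hx).mul_const (α lam)).sub
        (((s2 lam).2.2.1 x hx).mul_const (β lam))).congr_deriv ?_
      simp only [hy, hz]; ring)
    (by
      intro lam x hx
      refine ((((s1 lam).2.2.2 x hx).mul_const (α lam)).sub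
        (((s2 lam).2.2.2 x hx).mul_const (β lam))).congr_deriv ?_
      simp only [hy, hz]; ring)
    hd he h1 h2
  have L1 := aux_dom (l := sectorFilter δ) (K := 3) (c := (d + Complex.I * e) / 2) hT U₁.μ₁ U₁.int₁
    (f := fun lam t => Complex.exp (Complex.I * lam * T) * y lam t)
    (fun lam => continuousOn_const.mul (cy lam))
    (by
      filter_upwards [hbd] with lam h t ht
      rw [hf1, norm_div, Complex.norm_two]
      have := norm_add_le (f lam t) (g lam t)
      linarith [(h t ht).1, (h t ht).2])
    (by
      simp only [hf1]
      simpa using (hf0.add hg0).div_const 2)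
    (by
      intro t ht
      simp only [hf1]
      simpa using ((hft t ht).add (hgt t ht)).div_const 2)
  have L2 := aux_dom (l := sectorFilter δ) (K := 3)
    (c := -Complex.I * (d + Complex.I * e) / 2) hT U₁.μ₂ U₁.int₂
    (f := fun lam t => Complex.exp (Complex.I * lam * T) * z lam t)
    (fun lam => continuousOn_const.mul (cz lam))
    (by
      filter_upwards [hbd] with lam h t ht
      rw [hf2, norm_div, Complex.norm_two, norm_mul, norm_neg, Complex.norm_I, one_mul]
      have := norm_sub_le (f lam t) (g lam t)
      linarith [(h t ht).1, (h t ht).2])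
    (by
      simp only [hf2]
      simpa using ((hf0.sub hg0).const_mul (-Complex.I)).div_const 2)
    (by
      intro t ht
      simp only [hf2]
      simpa using (((hft t ht).sub (hgt t ht)).const_mul (-Complex.I)).div_const 2)
  have hsum := L1.add L2
  have hval : (d + Complex.I * e) / 2 * (U₁.h₁ - Complex.I * U₁.h₂) =
      (d + Complex.I * e) / 2 * (U₁.w₁ 0 * ((U₁.μ₁ {0}).toReal : ℂ)) +
      -Complex.I * (d + Complex.I * e) / 2 * (U₁.w₂ 0 * ((U₁.μ₂ {0}).toReal : ℂ)) := by
    simp only [NonlocalForm.h₁, NonlocalForm.h₂]; ring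
  rw [hval]
  refine hsum.congr fun lam => ?_
  have lin : ∀ (μ : Measure ℝ) (w : ℝ → ℂ), Integrable w μ → ∀ (F G : ℝ → ℂ),
      ContinuousOn F (Icc 0 T) → ContinuousOn G (Icc 0 T) → ∀ E A B : ℂ,
      ∫ t in Icc (0 : ℝ) T, w t * (E * (F t * A - G t * B)) ∂μ =
        E * ((∫ t in Icc (0 : ℝ) T, w t * F t ∂μ) * A -
          (∫ t in Icc (0 : ℝ) T, w t * G t ∂μ) * B) := by
    intro μ w hw F G hF hG E A B
    rw [← integral_mul_const, ← integral_mul_const, ← integral_sub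
      ((aux_int μ hw hF).mul_const A) ((aux_int μ hw hG).mul_const B), ← integral_const_mul]
    congr 1
    ext t
    ring
  simp only [hy, hz]
  rw [lin _ _ U₁.int₁ _ _ (s1 lam).1 (s2 lam).1, lin _ _ U₁.int₂ _ _ (s1 lam).2.1 (s2 lam).2.1]
  simp only [NonlocalForm.app]
  ring

/-- **Lemma 2, equations (19)**: for fixed `δ ∈ (0, π/2)`, as `|λ| → ∞` in the sector
`arg λ ∈ [δ, π−δ]`: `2i e^{iλT} Δ₁(λ) → h₁,₁ − i h₁,₂` and
`2 e^{iλT} Δ₁₁(λ) → h₁,₁ − i h₁,₂`. -/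
theorem statement15
    (T : ℝ) (hT : 0 < T)
    (p q : ℝ → ℂ) (hp : AbsContOn p T) (hq : AbsContOn q T)
    (U₁ : NonlocalForm T)
    (X₁ X₂ : ℂ → ℝ → ℂ × ℂ)
    (hX₁ : ∀ lam, IsDiracSol p q T lam (X₁ lam) ∧ X₁ lam 0 = (1, 0))
    (hX₂ : ∀ lam, IsDiracSol p q T lam (X₂ lam) ∧ X₂ lam 0 = (0, 1))
    (Δ₁ Δ₁₁ : ℂ → ℂ)
    (hΔ₁ : ∀ lam, Δ₁ lam =
      U₁.app (X₁ lam) * (X₂ lam T).1 - U₁.app (X₂ lam) * (X₁ lam T).1)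
    (hΔ₁₁ : ∀ lam, Δ₁₁ lam =
      U₁.app (X₁ lam) * (X₂ lam T).2 - U₁.app (X₂ lam) * (X₁ lam T).2)
    (δ : ℝ) (hδ : δ ∈ Ioo (0 : ℝ) (Real.pi / 2)) :
    Tendsto
      (fun lam : ℂ => 2 * Complex.I * Complex.exp (Complex.I * lam * (T : ℂ)) * Δ₁ lam)
      (sectorFilter δ) (nhds (U₁.h₁ - Complex.I * U₁.h₂)) ∧
    Tendsto
      (fun lam : ℂ => 2 * Complex.exp (Complex.I * lam * (T : ℂ)) * Δ₁₁ lam)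
      (sectorFilter δ) (nhds (U₁.h₁ - Complex.I * U₁.h₂)) := by
  have W := fun lam => aux_wronskian hT hp hq (hX₁ lam).1 (hX₂ lam).1 (hX₁ lam).2 (hX₂ lam).2
  constructor
  · have := (aux_main hT hp hq U₁ X₁ X₂ (fun lam => (hX₁ lam).1) (fun lam => (hX₂ lam).1) hδ
      (fun lam => (X₂ lam T).1) (fun lam => (X₁ lam T).1) (d := 0) (e := -1)
      (fun lam => by ring) (fun lam => by linear_combination -(W lam))
      (by simp) (by simp)).const_mul (2 * Complex.I)
    have hv : 2 * Complex.I * ((0 + Complex.I * -1) / 2 * (U₁.h₁ - Complex.I * U₁.h₂)) =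
        U₁.h₁ - Complex.I * U₁.h₂ := by
      linear_combination (-(U₁.h₁ - Complex.I * U₁.h₂)) * Complex.I_sq
    rw [hv] at this
    refine this.congr fun lam => ?_
    rw [hΔ₁]; ring
  · have := (aux_main hT hp hq U₁ X₁ X₂ (fun lam => (hX₁ lam).1) (fun lam => (hX₂ lam).1) hδ
      (fun lam => (X₂ lam T).2) (fun lam => (X₁ lam T).2) (d := 1) (e := 0)
      (fun lam => by linear_combination W lam) (fun lam => by ring)
      (by simp) (by simp)).const_mul 2
    have hv : 2 * ((1 + Complex.I * 0) / 2 * (U₁.h₁ - Complex.I * U₁.h₂)) =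
        U₁.h₁ - Complex.I * U₁.h₂ := by ring
    rw [hv] at this
    refine this.congr fun lam => ?_
    rw [hΔ₁₁]; ring
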